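/- Let Ω ⊆ ℝⁿ be open and bounded, let δ > 0, let c > 0, let 1 ≤ p ≤ ∞ with conjugate exponent p', and let u be smooth on Ω with Δu ≥ 1 on Ω. Suppose that ‖u‖_{L^p(Ω)} · |{y ∈ Ω : |u(y)| ≥ c}|^{1/p'} ≤ c. Then for every x ∈ Ω at distance at least δ from the boundary of Ω, u(x) ≤ (1 + |B_{δ/2}|^{-1}) c − (C_n/8) δ², where |B_{δ/2}| is the Lebesgue measure of a ball of radius δ/2 in ℝⁿ and C_n = (|∂B₁|/|B₁|)(1/(2n) − 1/(2(n+2))). -/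

import Mathlib

open MeasureTheory Metric Set ENNReal

/-- The Laplacian `Δu = Σᵢ ∂²u/∂xᵢ²` of a function `u : ℝⁿ → ℝ`. -/
noncomputable def laplacian {n : ℕ} (u : EuclideanSpace ℝ (Fin n) → ℝ)
    (x : EuclideanSpace ℝ (Fin n)) : ℝ :=
  ∑ i : Fin n,
    fderiv ℝ (fun y => fderiv ℝ u y (EuclideanSpace.single i 1)) x (EuclideanSpace.single i 1)

/-- The Lebesgue measure `|B₁|` of the unit ball in `ℝⁿ`. -/
noncomputable def unitBallVol (n : ℕ) : ℝ :=
  (volume (ball (0 : EuclideanSpace ℝ (Fin n)) 1)).toReal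

/-- The surface measure `|∂B₁|` of the unit sphere in `ℝⁿ`, i.e. `n·|B₁|`. -/
noncomputable def unitSphereArea (n : ℕ) : ℝ := n * unitBallVol n

/-- The constant `Cₙ = (|∂B₁|/|B₁|)(1/(2n) − 1/(2(n+2)))`. -/
noncomputable def Cn (n : ℕ) : ℝ :=
  (unitSphereArea n / unitBallVol n) * (1 / (2 * n) - 1 / (2 * (n + 2)))

/-- Truncated torsion function of the unit ball. -/
noncomputable def etaFn {n : ℕ} (y : EuclideanSpace ℝ (Fin n)) : ℝ := (1 - (min ‖y‖ 1) ^ 2) / 2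

lemma etaFn_lip {n : ℕ} : LipschitzWith 1 (etaFn (n := n)) := by
  apply LipschitzWith.of_dist_le_mul
  intro a b
  simp only [etaFn, NNReal.coe_one, one_mul, Real.dist_eq]
  have h1 : |min ‖a‖ 1 - min ‖b‖ 1| ≤ dist a b := by
    have h := abs_min_sub_min_le_max ‖a‖ 1 ‖b‖ 1
    have h2 := abs_norm_sub_norm_le a b
    rw [dist_eq_norm]
    simp only [sub_self, abs_zero] at h
    rw [max_eq_left (abs_nonneg _)] at h
    linarith
  have ha : 0 ≤ min ‖a‖ 1 := le_min (norm_nonneg _) zero_le_one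
  have hb : 0 ≤ min ‖b‖ 1 := le_min (norm_nonneg _) zero_le_one
  have ha1 : min ‖a‖ 1 ≤ 1 := min_le_right _ _
  have hb1 : min ‖b‖ 1 ≤ 1 := min_le_right _ _
  rw [abs_le] at *
  constructor <;> nlinarith

lemma etaFn_nonneg {n : ℕ} (y : EuclideanSpace ℝ (Fin n)) : 0 ≤ etaFn y := by
  have ha : 0 ≤ min ‖y‖ 1 := le_min (norm_nonneg _) zero_le_one
  have ha1 : min ‖y‖ 1 ≤ 1 := min_le_right _ _
  unfold etaFn
  nlinarith

lemma etaFn_out {n : ℕ} (y : EuclideanSpace ℝ (Fin n)) (h : 1 ≤ ‖y‖) : etaFn y = 0 := by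
  simp [etaFn, min_eq_right h]

lemma etaFn_lineDeriv_in {n : ℕ} (y v : EuclideanSpace ℝ (Fin n)) (h : ‖y‖ < 1) :
    lineDeriv ℝ etaFn y v = - inner ℝ y v := by
  have h1 : HasFDerivAt (fun z : EuclideanSpace ℝ (Fin n) => (1 - ‖z‖ ^ 2) / 2)
      ((2 : ℝ)⁻¹ • (- ((2 : ℕ) • (innerSL ℝ y)))) y := by
    have := ((hasStrictFDerivAt_norm_sq y).hasFDerivAt.const_sub 1).const_smul (2 : ℝ)⁻¹
    refine this.congr_of_eventuallyEq (Filter.Eventually.of_forall fun z => ?_)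
    simp; ring
  have h2 : HasFDerivAt etaFn ((2 : ℝ)⁻¹ • (- ((2 : ℕ) • (innerSL ℝ y)))) y := by
    refine h1.congr_of_eventuallyEq ?_
    have : ball (0 : EuclideanSpace ℝ (Fin n)) 1 ∈ nhds y := isOpen_ball.mem_nhds (by simpa using h)
    filter_upwards [this] with z hz
    have hz' : ‖z‖ ≤ 1 := by simpa using (mem_ball_zero_iff.1 hz).le
    simp [etaFn, min_eq_left hz']
  rw [(h2.hasLineDerivAt v).lineDeriv]
  simp

lemma etaFn_lineDeriv_out {n : ℕ} (y v : EuclideanSpace ℝ (Fin n)) (h : 1 < ‖y‖) :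
    lineDeriv ℝ etaFn y v = 0 := by
  have h2 : HasFDerivAt etaFn (0 : EuclideanSpace ℝ (Fin n) →L[ℝ] ℝ) y := by
    refine (hasFDerivAt_const (0 : ℝ) y).congr_of_eventuallyEq ?_
    have : {z : EuclideanSpace ℝ (Fin n) | 1 < ‖z‖} ∈ nhds y :=
      (isOpen_lt continuous_const continuous_norm).mem_nhds h
    filter_upwards [this] with z hz
    exact etaFn_out z (le_of_lt hz)
  rw [(h2.hasLineDerivAt v).lineDeriv]
  simp

lemma ibp_ball {n : ℕ} (hn : 0 < n) (g : EuclideanSpace ℝ (Fin n) → ℝ) (hg : ContDiff ℝ 1 g)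
    (hgc : HasCompactSupport g) (i : Fin n) :
    ∫ y in ball (0 : EuclideanSpace ℝ (Fin n)) 1, g y * y i =
      ∫ y in ball (0 : EuclideanSpace ℝ (Fin n)) 1,
        fderiv ℝ g y (EuclideanSpace.single i 1) * etaFn y := by
  have : Nonempty (Fin n) := ⟨⟨0, hn⟩⟩
  obtain ⟨D, hD⟩ := ContDiff.lipschitzWith_of_hasCompactSupport hgc hg one_ne_zero
  have key := LipschitzWith.integral_lineDeriv_mul_eq (μ := volume) (etaFn_lip (n := n)) hD hgc
    (EuclideanSpace.single i (1 : ℝ))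
  have hL : ∫ y, lineDeriv ℝ etaFn y (EuclideanSpace.single i (1 : ℝ)) * g y =
      - ∫ y in ball (0 : EuclideanSpace ℝ (Fin n)) 1, g y * y i := by
    rw [← integral_neg, ← integral_indicator measurableSet_ball]
    apply integral_congr_ae
    have hs : ∀ᵐ y : EuclideanSpace ℝ (Fin n), y ∉ sphere (0 : EuclideanSpace ℝ (Fin n)) 1 :=
      measure_eq_zero_iff_ae_notMem.1 (Measure.addHaar_sphere volume _ _)
    filter_upwards [hs] with y hy
    rw [mem_sphere_zero_iff_norm] at hy
    rcases lt_or_gt_of_ne hy with h | h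
    · rw [indicator_of_mem (by simpa using h), etaFn_lineDeriv_in _ _ h]
      simp [EuclideanSpace.inner_single_right]; ring
    · rw [indicator_of_notMem (by simpa using h.le), etaFn_lineDeriv_out _ _ h, zero_mul]
  have hR : ∫ y, lineDeriv ℝ g y (-(EuclideanSpace.single i (1 : ℝ))) * etaFn y =
      - ∫ y in ball (0 : EuclideanSpace ℝ (Fin n)) 1,
        fderiv ℝ g y (EuclideanSpace.single i 1) * etaFn y := by
    rw [← integral_neg, ← integral_indicator measurableSet_ball]
    congr 1
    ext y
    rw [((hg.differentiable one_ne_zero) y).lineDeriv_eq_fderiv]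
    by_cases h : ‖y‖ < 1
    · rw [indicator_of_mem (by simpa using h)]; simp
    · rw [indicator_of_notMem (by simpa using h), etaFn_out y (not_lt.1 h), mul_zero]
  rw [hL, hR] at key
  linarith

lemma integral_etaFn {n : ℕ} (hn : 0 < n) :
    ∫ y in ball (0 : EuclideanSpace ℝ (Fin n)) 1, etaFn y = unitBallVol n / (n + 2) := by
  have : Nonempty (Fin n) := ⟨⟨0, hn⟩⟩
  have h0 : ∫ y in ball (0 : EuclideanSpace ℝ (Fin n)) 1, etaFn y =
      ∫ y : EuclideanSpace ℝ (Fin n), (fun t : ℝ => (1 - (min t 1) ^ 2) / 2) ‖y‖ := by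
    rw [← integral_indicator measurableSet_ball]
    congr 1
    ext y
    by_cases h : ‖y‖ < 1
    · rw [indicator_of_mem (by simpa using h)]; simp [etaFn]
    · rw [indicator_of_notMem (by simpa using h)]; exact (etaFn_out y (not_lt.1 h)).symm
  rw [h0, integral_fun_norm_addHaar volume (fun t : ℝ => (1 - (min t 1) ^ 2) / 2)]
  have h1 : ∫ y in Ioi (0 : ℝ), y ^ (n - 1) * ((1 - (min y 1) ^ 2) / 2) =
      ∫ y in (0 : ℝ)..1, (y ^ (n - 1) / 2 - y ^ (n + 1) / 2) := by
    rw [intervalIntegral.integral_of_le zero_le_one, ← integral_indicator measurableSet_Ioi,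
      ← integral_indicator measurableSet_Ioc]
    congr 1
    ext y
    by_cases hy : 0 < y
    · by_cases h : y ≤ 1
      · rw [indicator_of_mem (by simpa using hy), indicator_of_mem (show y ∈ Ioc (0 : ℝ) 1 from ⟨hy, h⟩), min_eq_left h]
        obtain ⟨m, rfl⟩ : ∃ m, n = m + 1 := ⟨n - 1, by omega⟩
        simp; ring
      · rw [indicator_of_mem (by simpa using hy), indicator_of_notMem (fun h' => h h'.2),
          min_eq_right (not_le.1 h).le]
        simp
    · rw [indicator_of_notMem (by simpa using hy), indicator_of_notMem (fun h' => hy h'.1)]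
  simp only [finrank_euclideanSpace, Fintype.card_fin, smul_eq_mul, nsmul_eq_mul]
  rw [h1, intervalIntegral.integral_sub (by apply Continuous.intervalIntegrable; fun_prop)
    (by apply Continuous.intervalIntegrable; fun_prop)]
  simp only [intervalIntegral.integral_div, integral_pow]
  have hc : ((n - 1 : ℕ) : ℝ) + 1 = n := by
    rw [Nat.cast_sub hn]; simp
  rw [hc]
  have : (0 : ℝ) < n := by exact_mod_cast hn
  have hne : n - 1 + 1 ≠ 0 := by omega
  simp only [unitBallVol, Measure.real, one_pow, zero_pow hne, zero_pow (Nat.succ_ne_zero (n+1))]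
  push_cast
  field_simp
  ring

lemma mean_value_global {n : ℕ} (hn : 0 < n) (U : EuclideanSpace ℝ (Fin n) → ℝ)
    (hU : ContDiff ℝ 2 U) (hUc : HasCompactSupport U) (x : EuclideanSpace ℝ (Fin n))
    (r : ℝ) (hr : 0 < r) (hlap : ∀ y ∈ ball x r, 1 ≤ laplacian U y) :
    U x * unitBallVol n + r ^ 2 / 2 * (unitBallVol n / (n + 2)) ≤
      ∫ y in ball (0 : EuclideanSpace ℝ (Fin n)) 1, U (x + r • y) := by
  set B := ball (0 : EuclideanSpace ℝ (Fin n)) 1 with hB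
  have : IsFiniteMeasure (volume.restrict B) :=
    ⟨by rw [Measure.restrict_apply_univ]; exact measure_ball_lt_top⟩
  have hcont : Continuous U := hU.continuous
  have hdiff : Differentiable ℝ U := hU.differentiable (by norm_num)
  have hfc : Continuous (fderiv ℝ U) := hU.continuous_fderiv (by norm_num)
  obtain ⟨C0, hC0⟩ := hUc.exists_bound_of_continuous hcont
  obtain ⟨C, hC⟩ := (hUc.fderiv ℝ).exists_bound_of_continuous hfc
  -- integrability of continuous functions on the ball
  have hint : ∀ f : EuclideanSpace ℝ (Fin n) → ℝ, Continuous f →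
      Integrable f (volume.restrict B) := by
    intro f hf
    exact (hf.continuousOn.integrableOn_compact (isCompact_closedBall 0 1)).mono_set
      ball_subset_closedBall
  have hder : ∀ s : ℝ, HasDerivAt (fun s : ℝ => ∫ y in B, U (x + s • y))
      (∫ y in B, fderiv ℝ U (x + s • y) y) s := by
    intro s
    refine (hasDerivAt_integral_of_dominated_loc_of_deriv_le (μ := volume.restrict B)
      (F := fun s y => U (x + s • y)) (F' := fun s y => fderiv ℝ U (x + s • y) y)
      (s := univ) (bound := fun _ => C) Filter.univ_mem
      (Filter.Eventually.of_forall fun t => ?_) ?_ ?_ ?_ (integrable_const _) ?_).2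
    · exact (hint _ (by fun_prop)).aestronglyMeasurable
    · exact hint _ (by fun_prop)
    · exact (hint _ (by fun_prop)).aestronglyMeasurable
    · filter_upwards [ae_restrict_mem measurableSet_ball] with y hy t _
      have hy' : ‖y‖ ≤ 1 := (mem_ball_zero_iff.1 hy).le
      have hC' := hC (x + t • y)
      calc _ ≤ ‖fderiv ℝ U (x + t • y)‖ * ‖y‖ := ContinuousLinearMap.le_opNorm _ _
        _ ≤ ‖fderiv ℝ U (x + t • y)‖ * 1 := by gcongr
        _ ≤ C := by linarith
    · refine Filter.Eventually.of_forall fun y t _ => ?_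
      have h1 : HasDerivAt (fun t : ℝ => x + t • y) y t := by
        simpa using ((hasDerivAt_id t).smul_const y).const_add x
      exact (hdiff _).hasFDerivAt.comp_hasDerivAt t h1
  have hpart : ∀ s : ℝ, 0 < s → s < r →
      s * (unitBallVol n / (n + 2)) ≤ ∫ y in B, fderiv ℝ U (x + s • y) y := by
    intro s hs hsr
    set e : Fin n → EuclideanSpace ℝ (Fin n) := fun i => EuclideanSpace.single i 1 with he
    set G : Fin n → EuclideanSpace ℝ (Fin n) → ℝ := fun i z => fderiv ℝ U z (e i) with hG
    have hGs : ∀ i, ContDiff ℝ 1 (G i) := fun i =>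
      (hU.fderiv_right (m := 1) (by norm_num)).clm_apply contDiff_const
    have hGc : ∀ i, HasCompactSupport (G i) := fun i => hUc.fderiv_apply (𝕜 := ℝ) (e i)
    have hgs : ∀ i, ContDiff ℝ 1 (fun y => G i (x + s • y)) := fun i =>
      (hGs i).comp (contDiff_const.add (contDiff_id.const_smul s))
    have hgc : ∀ i, HasCompactSupport (fun y => G i (x + s • y)) := fun i =>
      (hGc i).comp_homeomorph ((Homeomorph.smulOfNeZero s hs.ne').trans (Homeomorph.addLeft x))
    have hgd : ∀ i y, fderiv ℝ (fun y => G i (x + s • y)) y (e i) =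
        s * fderiv ℝ (G i) (x + s • y) (e i) := by
      intro i y
      have h1 : HasFDerivAt (fun y : EuclideanSpace ℝ (Fin n) => x + s • y)
          (s • ContinuousLinearMap.id ℝ _) y :=
        ((hasFDerivAt_id y).const_smul s).const_add x
      have h2 := (((hGs i).differentiable one_ne_zero) (x + s • y)).hasFDerivAt.comp y h1
      rw [show (fun y => G i (x + s • y)) = G i ∘ (fun y => x + s • y) from rfl, h2.fderiv]
      simp
    have hsum : ∀ y : EuclideanSpace ℝ (Fin n),
        fderiv ℝ U (x + s • y) y = ∑ i, G i (x + s • y) * y i := by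
      intro y
      have hy : y = ∑ i, y i • e i := by
        ext j
        simp [he, Pi.single_apply]
      conv_lhs => rw [hy]
      rw [map_sum]
      simp only [map_smul, smul_eq_mul, ← hy]
      exact Finset.sum_congr rfl fun i _ => mul_comm _ _
    have hcg : ∀ i, Continuous fun y => fderiv ℝ (fun y => G i (x + s • y)) y (e i) := fun i =>
      ((hgs i).continuous_fderiv one_ne_zero).clm_apply continuous_const
    have heta : Continuous (etaFn (n := n)) := etaFn_lip.continuous
    calc s * (unitBallVol n / (n + 2)) = ∫ y in B, s * etaFn y := by
          rw [integral_const_mul, integral_etaFn hn]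
      _ ≤ ∫ y in B, ∑ i, fderiv ℝ (fun y => G i (x + s • y)) y (e i) * etaFn y := by
          refine setIntegral_mono_on (hint _ (by fun_prop))
            (hint _ (continuous_finsetSum _ fun i _ => (hcg i).mul heta)) measurableSet_ball ?_
          intro y hy
          rw [← Finset.sum_mul]
          refine mul_le_mul_of_nonneg_right ?_ (etaFn_nonneg y)
          simp only [hgd]
          rw [← Finset.mul_sum]
          have hy' : ‖y‖ < 1 := mem_ball_zero_iff.1 hy
          have := hlap (x + s • y) (by
            rw [mem_ball, dist_eq_norm, add_sub_cancel_left, norm_smul, Real.norm_of_nonneg hs.le]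
            nlinarith [norm_nonneg y])
          unfold laplacian at this
          simp only [hG, he]
          nlinarith
      _ = ∑ i, ∫ y in B, fderiv ℝ (fun y => G i (x + s • y)) y (e i) * etaFn y :=
          integral_finsetSum _ fun i _ => hint _ ((hcg i).mul heta)
      _ = ∑ i, ∫ y in B, G i (x + s • y) * y i :=
          Finset.sum_congr rfl fun i _ => (ibp_ball hn _ (hgs i) (hgc i) i).symm
      _ = ∫ y in B, ∑ i, G i (x + s • y) * y i :=
          (integral_finsetSum _ fun i _ => hint _ ((hgs i).continuous.mul (by fun_prop))).symm
      _ = _ := by simp only [hsum]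
  set K := unitBallVol n / (n + 2) with hK
  have hder2 : ∀ s : ℝ, HasDerivAt (fun s : ℝ => (∫ y in B, U (x + s • y)) - s ^ 2 / 2 * K)
      ((∫ y in B, fderiv ℝ U (x + s • y) y) - s * K) s := by
    intro s
    have h1 : HasDerivAt (fun s : ℝ => s ^ 2 / 2 * K) (s * K) s := by
      have := ((hasDerivAt_pow 2 s).div_const 2).mul_const K
      refine this.congr_deriv ?_
      push_cast
      ring
    exact (hder s).sub h1
  have hmono : MonotoneOn (fun s : ℝ => (∫ y in B, U (x + s • y)) - s ^ 2 / 2 * K) (Icc 0 r) := by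
    refine monotoneOn_of_deriv_nonneg (convex_Icc _ _)
      (fun s _ => (hder2 s).continuousAt.continuousWithinAt)
      (fun s _ => (hder2 s).differentiableAt.differentiableWithinAt) ?_
    intro s hs
    rw [interior_Icc] at hs
    rw [(hder2 s).deriv]
    linarith [hpart s hs.1 hs.2]
  have hfin := hmono (left_mem_Icc.2 hr.le) (right_mem_Icc.2 hr.le) hr.le
  simp only [zero_smul, add_zero, integral_const, smul_eq_mul, Measure.real,
    Measure.restrict_apply_univ] at hfin
  have hvol : (volume B).toReal = unitBallVol n := rfl
  rw [hvol] at hfin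
  nlinarith

lemma mean_value_local {n : ℕ} (hn : 0 < n) (Ω : Set (EuclideanSpace ℝ (Fin n)))
    (u : EuclideanSpace ℝ (Fin n) → ℝ) (hΩo : IsOpen Ω) (hu : ContDiffOn ℝ (⊤ : ℕ∞) u Ω)
    (hlap : ∀ x ∈ Ω, 1 ≤ laplacian u x) (x : EuclideanSpace ℝ (Fin n)) (r : ℝ) (hr : 0 < r)
    (hsub : ball x (2 * r) ⊆ Ω) :
    u x * unitBallVol n + r ^ 2 / 2 * (unitBallVol n / (n + 2)) ≤
      ∫ y in ball (0 : EuclideanSpace ℝ (Fin n)) 1, u (x + r • y) := by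
  let χ : ContDiffBump x := ⟨r * (5 / 4), r * (3 / 2), by positivity, by linarith⟩
  set U : EuclideanSpace ℝ (Fin n) → ℝ := fun y => χ y * u y with hUdef
  have hts : tsupport U ⊆ closedBall x (r * (3 / 2)) := by
    refine (tsupport_mul_subset_left).trans ?_
    rw [χ.tsupport_eq]
  have hUc : HasCompactSupport U := χ.hasCompactSupport.mul_right
  have hU : ContDiff ℝ 2 U := by
    rw [contDiff_iff_contDiffAt]
    intro y
    by_cases hy : y ∈ tsupport U
    swap
    · exact contDiffAt_const.congr_of_eventuallyEq (notMem_tsupport_iff_eventuallyEq.1 hy)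
    have hyΩ : y ∈ Ω := hsub (by
      have := mem_closedBall.1 (hts hy)
      rw [mem_ball]; linarith)
    have h1 : ContDiffAt ℝ 2 u y :=
      (hu.contDiffAt (hΩo.mem_nhds hyΩ)).of_le (by
        exact WithTop.coe_le_coe.2 (le_top : (2 : ℕ∞) ≤ ⊤))
    exact χ.contDiff.contDiffAt.mul h1
  have heq : ∀ y ∈ ball x (r * (5 / 4)), U y = u y := by
    intro y hy
    simp only [hUdef]
    rw [χ.one_of_mem_closedBall (ball_subset_closedBall hy), one_mul]
  have hev : ∀ y ∈ ball x r, U =ᶠ[nhds y] u := by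
    intro y hy
    filter_upwards [isOpen_ball.mem_nhds (ball_subset_ball (by linarith) hy :
      y ∈ ball x (r * (5 / 4)))] with z hz using heq z hz
  have hl : ∀ y ∈ ball x r, 1 ≤ laplacian U y := by
    intro y hy
    have : laplacian U y = laplacian u y := by
      unfold laplacian
      refine Finset.sum_congr rfl fun i _ => ?_
      have h2 : (fun z => fderiv ℝ U z (EuclideanSpace.single i 1)) =ᶠ[nhds y]
          (fun z => fderiv ℝ u z (EuclideanSpace.single i 1)) := by
        filter_upwards [(hev y hy).fderiv (𝕜 := ℝ)] with z hz
        rw [hz]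
      rw [h2.fderiv_eq]
    rw [this]
    exact hlap y (hsub (ball_subset_ball (by linarith) hy))
  have := mean_value_global hn U hU hUc x r hr hl
  rw [heq x (mem_ball_self (by positivity))] at this
  refine this.trans_eq (setIntegral_congr_fun measurableSet_ball fun y hy => ?_)
  apply heq
  have hy' : ‖y‖ < 1 := mem_ball_zero_iff.1 hy
  rw [mem_ball, dist_eq_norm, add_sub_cancel_left, norm_smul, Real.norm_of_nonneg hr.le]
  nlinarith [norm_nonneg y]

lemma setIntegral_ball_scale {n : ℕ} (u : EuclideanSpace ℝ (Fin n) → ℝ)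
    (x : EuclideanSpace ℝ (Fin n)) (r : ℝ) (hr : 0 < r) :
    ∫ y in ball (0 : EuclideanSpace ℝ (Fin n)) 1, u (x + r • y) =
      (r ^ n)⁻¹ * ∫ y in ball x r, u y := by
  have h := Measure.setIntegral_comp_smul_of_pos (volume : Measure (EuclideanSpace ℝ (Fin n)))
    (fun z => u (x + z)) (ball 0 1) hr
  rw [h, smul_unitBall_of_pos hr, finrank_euclideanSpace, Fintype.card_fin, smul_eq_mul]
  congr 1
  have hmp := measurePreserving_add_left (volume : Measure (EuclideanSpace ℝ (Fin n))) x
  have := hmp.setIntegral_preimage_emb (measurableEmbedding_addLeft x) u (ball x r)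
  rw [← this]
  congr 2
  ext z
  simp

/-- Let `Ω ⊆ ℝⁿ` be open and bounded, `δ, c > 0`, `1 ≤ p ≤ ∞` with
conjugate exponent `q`, and let `u` be smooth on `Ω` with `Δu ≥ 1` on `Ω`. If
`‖u‖_{L^p(Ω)} · |{y ∈ Ω : |u(y)| ≥ c}|^(1/q) ≤ c`, then for every `x ∈ Ω` at distance at
least `δ` from the boundary, `u(x) ≤ (1 + |B_{δ/2}|⁻¹) c − (Cₙ/8) δ²`. -/
theorem pointwise_bound_from_small_product (n : ℕ) (hn : 0 < n)
    (Ω : Set (EuclideanSpace ℝ (Fin n))) (hΩo : IsOpen Ω) (hΩb : Bornology.IsBounded Ω)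
    (δ c : ℝ) (hδ : 0 < δ) (hc : 0 < c)
    (p q : ℝ≥0∞) (hp : 1 ≤ p) (hpq : 1 / p + 1 / q = 1)
    (u : EuclideanSpace ℝ (Fin n) → ℝ) (hu : ContDiffOn ℝ (⊤ : ℕ∞) u Ω)
    (hlap : ∀ x ∈ Ω, 1 ≤ laplacian u x)
    (hsmall : eLpNorm u p (volume.restrict Ω) *
        volume {y ∈ Ω | c ≤ |u y|} ^ (1 / q).toReal ≤ ENNReal.ofReal c) :
    ∀ x ∈ Ω, δ ≤ infDist x Ωᶜ →
      u x ≤ (1 + ((volume (ball (0 : EuclideanSpace ℝ (Fin n)) (δ / 2))).toReal)⁻¹) * c -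
        Cn n / 8 * δ ^ 2 := by
  intro x hx hdist
  have hsub : ball x (2 * (δ / 2)) ⊆ Ω := by
    intro y hy
    by_contra hy'
    have h1 : infDist x Ωᶜ ≤ dist x y := infDist_le_dist_of_mem hy'
    rw [mem_ball, dist_comm] at hy
    linarith
  have hmv := mean_value_local hn Ω u hΩo hu hlap x (δ / 2) (by positivity) hsub
  rw [setIntegral_ball_scale u x (δ / 2) (by positivity)] at hmv
  have hcl : closedBall x (δ / 2) ⊆ Ω :=
    (closedBall_subset_ball (by linarith)).trans hsub
  set S := ball x (δ / 2) with hS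
  have hSΩ : S ⊆ Ω := ball_subset_closedBall.trans hcl
  have hucont : ContinuousOn u Ω := hu.continuousOn
  have hSint : IntegrableOn u S := by
    exact ((hucont.mono hcl).integrableOn_compact (isCompact_closedBall _ _)).mono_set
      ball_subset_closedBall
  have hnpos : (0 : ℝ) < n := by exact_mod_cast hn
  -- the exceptional set
  set A := {y ∈ Ω | c ≤ |u y|} with hA
  have hAm : MeasurableSet A := by
    have : A = Ω \ (Ω ∩ u ⁻¹' {t | |t| < c}) := by
      ext y
      simp only [hA, mem_ofPred_eq, mem_sdiff, mem_inter_iff, mem_preimage, not_and, not_lt]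
      tauto
    rw [this]
    exact hΩo.measurableSet.diff (hucont.isOpen_inter_preimage hΩo
      (isOpen_lt continuous_abs continuous_const)).measurableSet
  have hAΩ : A ⊆ Ω := fun y hy => hy.1
  have hexp : (1 / q).toReal = 1 / (1 : ℝ≥0∞).toReal - 1 / p.toReal := by
    have hp1 : 1 / p ≠ ∞ := by
      intro h; rw [h] at hpq; simp at hpq
    have hq1 : 1 / q ≠ ∞ := by
      intro h; rw [h] at hpq; simp at hpq
    have := congrArg ENNReal.toReal hpq
    rw [ENNReal.toReal_add hp1 hq1] at this
    simp only [one_div, ENNReal.toReal_inv, ENNReal.toReal_one] at this ⊢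
    linarith
  have hmeas : AEStronglyMeasurable u (volume.restrict A) :=
    (hucont.aestronglyMeasurable hΩo.measurableSet).mono_measure (Measure.restrict_mono_set _ hAΩ)
  have hL1 : eLpNorm u 1 (volume.restrict A) ≤ ENNReal.ofReal c := by
    refine (eLpNorm_le_eLpNorm_mul_rpow_measure_univ hp hmeas).trans (le_trans ?_ hsmall)
    rw [← hexp, Measure.restrict_apply_univ]
    gcongr
  have hAint : IntegrableOn u A := by
    rw [IntegrableOn, ← memLp_one_iff_integrable]
    exact ⟨hmeas, hL1.trans_lt ENNReal.ofReal_lt_top⟩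
  have hAabs : ∫ y in A, |u y| ≤ c := by
    have h1 : ENNReal.ofReal (∫ y in A, ‖u y‖) ≤ ENNReal.ofReal c := by
      rw [ofReal_integral_norm_eq_lintegral_enorm hAint, ← eLpNorm_one_eq_lintegral_enorm]
      exact hL1
    exact (ENNReal.ofReal_le_ofReal_iff hc.le).1 h1
  have hSfin : volume S ≠ ∞ := measure_ball_lt_top.ne
  have hmain : ∫ y in S, u y ≤ c * (volume S).toReal + c := by
    have hAi : Integrable (A.indicator fun y => |u y|) := by
      rw [integrable_indicator_iff hAm]
      exact hAint.abs
    have hcI : Integrable (fun _ : EuclideanSpace ℝ (Fin n) => c) (volume.restrict S) :=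
      integrableOn_const hSfin
    have hind : IntegrableOn (A.indicator fun y => |u y|) S :=
      hAi.integrableOn
    calc ∫ y in S, u y ≤ ∫ y in S, (c + A.indicator (fun y => |u y|) y) := by
          refine setIntegral_mono_on hSint (hcI.add hind)
            measurableSet_ball ?_
          intro y hy
          by_cases h : y ∈ A
          · rw [indicator_of_mem h]; linarith [le_abs_self (u y)]
          · rw [indicator_of_notMem h]
            have : |u y| < c := by
              by_contra h'
              exact h ⟨hSΩ hy, not_lt.1 h'⟩
            linarith [le_abs_self (u y)]
      _ = c * (volume S).toReal + ∫ y in S, A.indicator (fun y => |u y|) y := by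
          rw [integral_add hcI hind]
          simp [Measure.real, mul_comm]
      _ ≤ c * (volume S).toReal + ∫ y, A.indicator (fun y => |u y|) y := by
          refine add_le_add le_rfl (setIntegral_le_integral hAi ?_)
          exact Filter.Eventually.of_forall fun y => indicator_nonneg (fun _ _ => abs_nonneg _) y
      _ ≤ _ := by
          rw [integral_indicator hAm]
          linarith
  have hV : ∀ z : EuclideanSpace ℝ (Fin n),
      (volume (ball z (δ / 2))).toReal = (δ / 2) ^ n * unitBallVol n := by
    intro z
    rw [Measure.addHaar_ball_of_pos _ z (by positivity), ENNReal.toReal_mul,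
      ENNReal.toReal_ofReal (by positivity), finrank_euclideanSpace, Fintype.card_fin]
    rfl
  have hb : 0 < unitBallVol n :=
    ENNReal.toReal_pos (measure_ball_pos volume _ one_pos).ne' measure_ball_lt_top.ne
  rw [hS, hV x, ← hS] at hmain
  rw [hV 0]
  have hCn : Cn n = 1 / (n + 2) := by
    unfold Cn unitSphereArea
    field_simp
    ring
  rw [hCn]
  set R := (δ / 2) ^ n with hR
  have hRpos : 0 < R := by positivity
  have h3 : u x * unitBallVol n + (δ / 2) ^ 2 / 2 * (unitBallVol n / (n + 2)) ≤
      R⁻¹ * (c * (R * unitBallVol n) + c) :=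
    hmv.trans (mul_le_mul_of_nonneg_left hmain (by positivity))
  have h4 : (u x + 1 / (n + 2) / 8 * δ ^ 2) * unitBallVol n ≤
      ((1 + (R * unitBallVol n)⁻¹) * c) * unitBallVol n := by
    calc _ = u x * unitBallVol n + (δ / 2) ^ 2 / 2 * (unitBallVol n / (n + 2)) := by
          field_simp
          ring
      _ ≤ _ := h3
      _ = _ := by field_simp
  have := le_of_mul_le_mul_right h4 hb
  linarith
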